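/- arXiv:math/0502579 — 2 statements merged into one kernel-verified Lean document; each statement's English description precedes it below -/
import Mathlib

section
/- Let ε = ε(n) → 0⁺ and L = L(n) → ∞ with L·ε² → ∞. Let m = m(n) be integers with m = L(1 + ε + o(ε)), and let p_1, …, p_L be probabilities summing to 1 with p_i = 1/L + o(ε/L) uniformly in i. Place exactly m balls independently into bins 1,…,L, each ball going into bin i with probability p_i, and let Z_i be the number of balls in bin i. Then the probability f(m) that the resulting leftwalk satisfies ESC_L satisfies f(m) ~ 2ε as n → ∞. -/
open Filter Topology Real Finset

-- Indicator of a proposition, as a real number.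
open Classical in
noncomputable def ind (P : Prop) : ℝ := if P then 1 else 0

/-- Probability that, placing exactly `m` balls independently into bins `1,…,L`
(ball `j` goes into bin `i+1` with probability `p i`), the leftwalk
`Y_0 = 1`, `Y_i = Y_{i-1} + Z_i - 1` defined by the bin counts `Z_i` satisfies
`ESC_L`, i.e. `Y_t > 0` (equivalently `#{j : balls in first t bins} ≥ t`)
for all `1 ≤ t ≤ L`. -/
noncomputable def fixedLeftProb (L m : ℕ) (p : ℕ → ℝ) : ℝ :=
  ∑ ω : Fin m → Fin L, (∏ j, p ((ω j : ℕ))) *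
    ind (∀ t, 1 ≤ t → t ≤ L →
      t ≤ (Finset.univ.filter (fun j => ((ω j : ℕ) < t))).card)

/-- Probability that, placing exactly `m` balls independently into bins `1,…,L`
(ball `j` goes into bin `i+1` with probability `p i`), the rightwalk
`Y_0^R = 0`, `Y_i^R = Y_{i-1}^R + 1 - Z_i^R` defined by the bin counts `Z_i^R`
satisfies `ESC_L^R`, i.e. `Y_t^R > 0` (equivalently
`#{j : balls in first t bins} ≤ t - 1`) for all `1 ≤ t ≤ L`. -/
noncomputable def fixedRightProb (L m : ℕ) (p : ℕ → ℝ) : ℝ :=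
  ∑ ω : Fin m → Fin L, (∏ j, p ((ω j : ℕ))) *
    ind (∀ t, 1 ≤ t → t ≤ L →
      (Finset.univ.filter (fun j => ((ω j : ℕ) < t))).card < t)


noncomputable def surv (ι : Type) [Fintype ι] [DecidableEq ι] (L : ℕ) (p : ℕ → ℝ) (y : ℕ) : ℝ :=
  ∑ ω : ι → Fin L, (∏ j, p ((ω j : ℕ))) *
    ind (∀ t, 1 ≤ t → t ≤ L →
      t < y + (Finset.univ.filter (fun j => ((ω j : ℕ) < t))).card)

lemma surv_equiv {ι κ : Type} [Fintype ι] [DecidableEq ι] [Fintype κ] [DecidableEq κ] (e : ι ≃ κ) (L : ℕ) (p : ℕ → ℝ) (y : ℕ) :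
    surv ι L p y = surv κ L p y := by
  unfold surv
  refine Fintype.sum_equiv (e.arrowCongr (Equiv.refl _)) _ _ ?_
  intro ω
  congr 1
  · refine Fintype.prod_equiv e _ _ ?_
    intro j; simp
  · congr 1
    apply propext
    refine forall_congr' fun t => forall_congr' fun _ => forall_congr' fun _ => ?_
    have : (Finset.univ.filter (fun j => ((ω j : ℕ) < t))).card =
      (Finset.univ.filter (fun j => ((((e.arrowCongr (Equiv.refl (Fin L))) ω) j : ℕ) < t))).card := by
      refine Finset.card_bij (fun a _ => e a) ?_ ?_ ?_
      · intro a ha; simpa using ha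
      · intro a _ b _ h; exact e.injective h
      · intro b hb
        exact ⟨e.symm b, by simpa using hb, by simp⟩
    rw [this]

lemma surv_peel (ι : Type) [Fintype ι] [DecidableEq ι] (L : ℕ) (p : ℕ → ℝ) (y : ℕ) :
    surv ι (L + 1) p y = ∑ S : Finset ι, p 0 ^ S.card *
      (if 1 < y + S.card then
        surv (Fin (Fintype.card ι - S.card)) L (fun i => p (i + 1)) (y + S.card - 1) else 0) := by
  unfold surv
  rw [← Finset.sum_fiberwise (s := Finset.univ)
    (g := fun ω : ι → Fin (L + 1) => Finset.univ.filter (fun j => ω j = 0))]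
  refine Finset.sum_congr rfl fun S _ => ?_
  have hcard : Fintype.card {j // j ∉ S} = Fintype.card ι - S.card := by
    rw [Fintype.card_subtype_compl]; simp
  have e : {j // j ∉ S} ≃ Fin (Fintype.card ι - S.card) := Fintype.equivFinOfCardEq hcard
  have h2 := surv_equiv e L (fun i => p (i + 1)) (y + S.card - 1)
  unfold surv at h2
  rw [← h2]
  clear h2
  have key : ∀ ω' : {j // j ∉ S} → Fin L, ∀ t : ℕ,
      (Finset.univ.filter (fun j : ι => (((if h : j ∈ S then (0 : Fin (L + 1)) else (ω' ⟨j, h⟩).succ) : Fin (L+1)) : ℕ) < t + 1)).card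
        = S.card + (Finset.univ.filter (fun j => ((ω' j : ℕ) < t))).card := by
    intro ω' t
    have h1 : (Finset.univ.filter (fun j : ι => (((if h : j ∈ S then (0 : Fin (L + 1)) else (ω' ⟨j, h⟩).succ) : Fin (L+1)) : ℕ) < t + 1))
        = S ∪ (Finset.univ.filter (fun j => ((ω' j : ℕ) < t))).map (Function.Embedding.subtype _) := by
      ext j
      by_cases h : j ∈ S
      · simp [h]
      · simp [h]
    rw [h1, Finset.card_union_of_disjoint, Finset.card_map]
    rw [Finset.disjoint_left]
    intro j hj hj2
    simp at hj2
    exact hj2.1 hj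
  have key2 : ∀ ω' : {j // j ∉ S} → Fin L,
      ∏ j : ι, p (((if h : j ∈ S then (0 : Fin (L + 1)) else (ω' ⟨j, h⟩).succ) : Fin (L+1)) : ℕ)
        = p 0 ^ S.card * ∏ j, p ((ω' j : ℕ) + 1) := by
    intro ω'
    rw [← Fintype.prod_subtype_mul_prod_subtype (fun j => j ∈ S)]
    congr 1
    · rw [Finset.prod_congr rfl (g := fun _ => p 0)]
      · simp
      · intro j _; simp [j.2]
    · refine Finset.prod_congr rfl fun j _ => ?_
      simp [j.2]
  have hL : ∑ ω ∈ Finset.univ.filter (fun ω : ι → Fin (L+1) => Finset.univ.filter (fun j => ω j = 0) = S),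
      (∏ j, p ((ω j : ℕ))) * ind (∀ t, 1 ≤ t → t ≤ L + 1 →
      t < y + (Finset.univ.filter (fun j => ((ω j : ℕ) < t))).card) =
      ∑ ω' : {j // j ∉ S} → Fin L, p 0 ^ S.card * ((∏ j, p ((ω' j : ℕ) + 1)) *
        ind (∀ t, t ≤ L → t + 1 < y + (S.card + (Finset.univ.filter (fun j => ((ω' j : ℕ) < t))).card))) := by
    symm
    refine Finset.sum_bij (fun ω' _ => fun j : ι => if h : j ∈ S then (0 : Fin (L + 1)) else (ω' ⟨j, h⟩).succ) ?_ ?_ ?_ ?_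
    · intro ω' _
      simp only [Finset.mem_filter, Finset.mem_univ, true_and]
      ext j
      by_cases h : j ∈ S <;> simp [h]
    · intro a _ b _ hab
      ext ⟨j, hj⟩
      have := congrFun hab j
      simp [hj] at this
      rw [this]
    · intro ω hω
      simp only [Finset.mem_filter, Finset.mem_univ, true_and] at hω
      have hz : ∀ j, j ∈ S ↔ ω j = 0 := by intro j; rw [← hω]; simp
      refine ⟨fun j => (ω j.1).pred (fun h => j.2 ((hz _).2 h)), Finset.mem_univ _, ?_⟩
      funext j
      by_cases h : j ∈ S
      · simp [h, (hz j).1 h]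
      · simp [h]
    · intro ω' _
      rw [key2, mul_assoc]
      congr 2
      congr 1
      apply propext
      constructor
      · intro H t h1 h2
        obtain ⟨s, rfl⟩ : ∃ s, t = s + 1 := ⟨t - 1, by omega⟩
        rw [key]
        exact H s (by omega)
      · intro H t ht
        have := H (t + 1) (by omega) (by omega)
        rwa [key] at this
  rw [hL, ← Finset.mul_sum]
  congr 1
  split_ifs with hy
  · refine Finset.sum_congr rfl fun ω' _ => ?_
    congr 2
    apply propext
    constructor
    · intro H t h1 h2
      have := H t h2
      omega
    · intro H t ht
      rcases Nat.eq_zero_or_pos t with rfl | h0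
      · simp; omega
      · have := H t h0 ht
        omega
  · refine Finset.sum_eq_zero fun ω' _ => ?_
    have : ¬ (∀ t, t ≤ L → t + 1 < y + (S.card + (Finset.univ.filter (fun j => ((ω' j : ℕ) < t))).card)) := by
      intro H
      have := H 0 (by omega)
      simp at this
      omega
    rw [ind, if_neg this, mul_zero]

/-- Survival probability (unnormalised) with `n` balls. -/
noncomputable def sv (L n : ℕ) (p : ℕ → ℝ) (y : ℕ) : ℝ := surv (Fin n) L p y

lemma sv_succ (L n : ℕ) (p : ℕ → ℝ) (y : ℕ) :
    sv (L + 1) n p y = ∑ z ∈ Finset.range (n + 1), (n.choose z : ℝ) * (p 0 ^ z *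
      (if 1 < y + z then sv L (n - z) (fun i => p (i + 1)) (y + z - 1) else 0)) := by
  unfold sv
  rw [surv_peel]
  have := Finset.sum_powerset_apply_card (α := ℝ) (fun z => p 0 ^ z *
      (if 1 < y + z then surv (Fin (n - z)) L (fun i => p (i + 1)) (y + z - 1) else 0)) (x := (Finset.univ : Finset (Fin n)))
  simp only [Finset.powerset_univ, Finset.card_univ, Fintype.card_fin, nsmul_eq_mul] at this
  rw [← this]
  refine Finset.sum_congr rfl fun S _ => by rw [Fintype.card_fin]

lemma sv_zero (n : ℕ) (p : ℕ → ℝ) (y : ℕ) : sv 0 n p y = 0 ^ n := by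
  unfold sv surv
  rcases n with _ | n
  · have h : ind (∀ t, 1 ≤ t → t ≤ 0 → t < y) = 1 := by
      rw [ind, if_pos]; intro t h1 h2; omega
    simp only [pow_zero]
    rw [Fintype.sum_unique]
    simpa using h
  · simp

lemma sv_le (L n : ℕ) (p : ℕ → ℝ) (y : ℕ) (hp : ∀ i < L, 0 ≤ p i) :
    sv L n p y ≤ (∑ i ∈ Finset.range L, p i) ^ n := by
  rw [Finset.sum_range, ← Fin.prod_const n, Finset.prod_univ_sum, Fintype.piFinset_univ]
  refine Finset.sum_le_sum fun ω _ => ?_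
  have h0 : 0 ≤ ∏ j, p ((ω j : ℕ)) := Finset.prod_nonneg fun j _ => hp _ (ω j).2
  refine mul_le_of_le_one_right h0 ?_
  unfold ind; split_ifs <;> norm_num

lemma fixedLeft_eq (L m : ℕ) (p : ℕ → ℝ) : fixedLeftProb L m p = sv L m p 1 := by
  unfold fixedLeftProb sv surv
  refine Finset.sum_congr rfl fun ω _ => ?_
  congr 2
  apply propext
  refine forall_congr' fun t => forall_congr' fun _ => forall_congr' fun _ => ?_
  omega

lemma sv_nonneg (L n : ℕ) (p : ℕ → ℝ) (y : ℕ) (hp : ∀ i < L, 0 ≤ p i) : 0 ≤ sv L n p y := by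
  refine Finset.sum_nonneg fun ω _ => ?_
  have h0 : 0 ≤ ∏ j, p ((ω j : ℕ)) := Finset.prod_nonneg fun j _ => hp _ (ω j).2
  refine mul_nonneg h0 ?_
  unfold ind; split_ifs <;> norm_num

lemma exp_neg_le_quad (u : ℝ) (hu : 0 ≤ u) : Real.exp (-u) ≤ 1 - u + u ^ 2 / 2 := by
  have h := Real.quadratic_le_exp_of_nonneg hu
  have hpos : 0 < 1 - u + u ^ 2 / 2 := by nlinarith [sq_nonneg (u - 1)]
  rw [Real.exp_neg, inv_le_comm₀ (Real.exp_pos _) hpos]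
  refine le_trans ?_ h
  rw [inv_le_iff_one_le_mul₀ hpos]
  nlinarith [sq_nonneg (u ^ 2)]

lemma sv_lower (b Lm : ℕ) (lo hi : ℝ) (hlo : 0 < lo) (θ : ℕ → ℝ)
    (hθ : ∀ r < Lm, 0 ≤ θ r ∧ θ r ≤ 2)
    (H : ∀ r y : ℕ, r < Lm → y ≤ r + 1 + b →
      θ r - ((r : ℝ) + 1 + b - y) * (lo / hi / (r + 1)) * (θ r - θ r ^ 2 / 2)
        ≤ (θ r - θ (r + 1)) * y) :
    ∀ (L : ℕ) (p : ℕ → ℝ) (n y : ℕ), L ≤ Lm → (∀ i < L, lo ≤ p i ∧ p i ≤ hi) → n + y = L + b →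
      (∑ i ∈ Finset.range L, p i) ^ n * (1 - Real.exp (-(θ L * y))) ≤ sv L n p y := by
  intro L
  induction L with
  | zero =>
    intro p n y _ _ _
    rw [sv_zero]
    simp only [Finset.range_zero, Finset.sum_empty]
    refine mul_le_of_le_one_right (by positivity) ?_
    linarith [Real.exp_pos (-(θ 0 * y))]
  | succ r ih =>
    intro p n y hL hp hny
    have hp0 : ∀ i < r + 1, 0 ≤ p i := fun i hi' => hlo.le.trans (hp i hi').1
    rcases Nat.eq_zero_or_pos y with rfl | hy
    · simpa using sv_nonneg (r + 1) n p 0 hp0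
    set q' := ∑ i ∈ Finset.range r, p (i + 1) with hq'
    set q := ∑ i ∈ Finset.range (r + 1), p i with hq
    have hqq : q = p 0 + q' := by rw [hq, Finset.sum_range_succ', add_comm]
    set φ := θ r with hφ
    obtain ⟨hφ0, hφ2⟩ := hθ r (by omega)
    set x := Real.exp (-φ) with hx
    have hq'0 : 0 ≤ q' := Finset.sum_nonneg fun i hi' => hp0 _ (by simp at hi'; omega)
    have hp00 : lo ≤ p 0 := (hp 0 (by omega)).1
    have hhi : 0 < hi := hlo.trans_le (hp00.trans (hp 0 (by omega)).2)
    have hqpos : 0 < q := by linarith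
    have hqle : q ≤ (r + 1) * hi := by
      calc q ≤ ∑ i ∈ Finset.range (r + 1), hi :=
            Finset.sum_le_sum fun i hi' => (hp i (by simpa using hi')).2
        _ = (r + 1) * hi := by simp
    rw [sv_succ]
    have step : ∑ z ∈ Finset.range (n + 1), (n.choose z : ℝ) * (p 0 ^ z *
        (q' ^ (n - z) * (1 - Real.exp (-(φ * ((y : ℝ) - 1))) * x ^ z))) ≤
        ∑ z ∈ Finset.range (n + 1), (n.choose z : ℝ) * (p 0 ^ z *
      (if 1 < y + z then sv r (n - z) (fun i => p (i + 1)) (y + z - 1) else 0)) := by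
      refine Finset.sum_le_sum fun z hz => ?_
      have hzn : z ≤ n := by simp at hz; omega
      refine mul_le_mul_of_nonneg_left ?_ (by positivity)
      refine mul_le_mul_of_nonneg_left ?_ (pow_nonneg (hp0 0 (by omega)) _)
      have he : Real.exp (-(φ * ((y : ℝ) - 1))) * x ^ z = Real.exp (-(φ * ((y + z - 1 : ℕ) : ℝ))) := by
        rw [hx, ← Real.exp_nat_mul, ← Real.exp_add]
        congr 1
        rw [Nat.cast_sub (by omega)]
        push_cast; ring
      rw [he]
      split_ifs with h1
      · refine ih (fun i => p (i + 1)) (n - z) (y + z - 1) (by omega) (fun i hi' => hp _ (by omega)) (by omega)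
      · have : y + z - 1 = 0 := by omega
        rw [this]; simp
    refine le_trans ?_ step
    have hsum : ∑ z ∈ Finset.range (n + 1), (n.choose z : ℝ) * (p 0 ^ z *
        (q' ^ (n - z) * (1 - Real.exp (-(φ * ((y : ℝ) - 1))) * x ^ z))) =
        q ^ n - Real.exp (-(φ * ((y : ℝ) - 1))) * (p 0 * x + q') ^ n := by
      rw [hqq, add_pow, add_pow, Finset.mul_sum, ← Finset.sum_sub_distrib]
      refine Finset.sum_congr rfl fun z _ => ?_
      rw [mul_pow]; ring
    rw [hsum]
    have hD : p 0 * x + q' ≤ q * Real.exp (-(p 0 / q * (1 - x))) := by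
      have := Real.add_one_le_exp (-(p 0 / q * (1 - x)))
      calc p 0 * x + q' = q * (-(p 0 / q * (1 - x)) + 1) := by
            field_simp; rw [hqq]; ring
        _ ≤ _ := mul_le_mul_of_nonneg_left this hqpos.le
    have hx0 : 0 < x := Real.exp_pos _
    have hDn : (p 0 * x + q') ^ n ≤ q ^ n * Real.exp (-(n * (p 0 / q * (1 - x)))) := by
      calc (p 0 * x + q') ^ n ≤ (q * Real.exp (-(p 0 / q * (1 - x)))) ^ n :=
            pow_le_pow_left₀ (by have := hp0 0 (by omega); positivity) hD n
        _ = _ := by rw [mul_pow, ← Real.exp_nat_mul]; congr 2; ring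
    have hpi : lo / hi / (r + 1) ≤ p 0 / q := by
      rw [div_div, div_le_div_iff₀ (by positivity) hqpos]
      have : lo * q ≤ lo * ((r + 1) * hi) := mul_le_mul_of_nonneg_left hqle hlo.le
      have : lo * ((r + 1) * hi) ≤ p 0 * ((r + 1) * hi) := mul_le_mul_of_nonneg_right hp00 (by positivity)
      linarith
    have hxq : φ - φ ^ 2 / 2 ≤ 1 - x := by linarith [exp_neg_le_quad φ hφ0]
    have hquad : 0 ≤ φ - φ ^ 2 / 2 := by nlinarith
    have hmul : n * (lo / hi / (r + 1) * (φ - φ ^ 2 / 2)) ≤ n * (p 0 / q * (1 - x)) := by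
      refine mul_le_mul_of_nonneg_left ?_ (by positivity)
      exact mul_le_mul hpi hxq hquad (by have := hp0 0 (by omega); positivity)
    have hH := H r y (by omega) (by omega)
    have hn : (n : ℝ) = r + 1 + b - y := by
      have : ((n + y : ℕ) : ℝ) = ((r + 1 + b : ℕ) : ℝ) := by rw [hny]
      push_cast at this; linarith
    rw [← hn] at hH
    have hfin : Real.exp (-(φ * ((y : ℝ) - 1))) * Real.exp (-(n * (p 0 / q * (1 - x)))) ≤ Real.exp (-(θ (r + 1) * y)) := by
      rw [← Real.exp_add]
      apply Real.exp_le_exp.2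
      rw [mul_assoc] at hH
      nlinarith
    have : Real.exp (-(φ * ((y : ℝ) - 1))) * (p 0 * x + q') ^ n ≤ q ^ n * Real.exp (-(θ (r + 1) * y)) := by
      calc _ ≤ Real.exp (-(φ * ((y : ℝ) - 1))) * (q ^ n * Real.exp (-(n * (p 0 / q * (1 - x))))) :=
            mul_le_mul_of_nonneg_left hDn (Real.exp_pos _).le
        _ = q ^ n * (Real.exp (-(φ * ((y : ℝ) - 1))) * Real.exp (-(n * (p 0 / q * (1 - x))))) := by ring
        _ ≤ _ := mul_le_mul_of_nonneg_left hfin (by positivity)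
    linarith

lemma sum_mul_choose (n : ℕ) (a c : ℝ) :
    ∑ z ∈ Finset.range (n + 1), (z : ℝ) * (a ^ z * c ^ (n - z) * (n.choose z : ℝ)) =
      n * a * (a + c) ^ (n - 1) := by
  rcases n with _ | n
  · simp
  · rw [Finset.sum_range_succ', Nat.add_sub_cancel, add_pow, Finset.mul_sum]
    simp only [Nat.cast_zero, zero_mul, add_zero]
    refine Finset.sum_congr rfl fun z _ => ?_
    have h : ((n + 1 : ℕ) : ℝ) * (n.choose z : ℝ) = ((n + 1).choose (z + 1) : ℝ) * ((z + 1 : ℕ) : ℝ) := by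
      exact_mod_cast Nat.add_one_mul_choose_eq n z
    have : n + 1 - (z + 1) = n - z := by omega
    rw [this]
    calc _ = a ^ (z + 1) * c ^ (n - z) * (((n + 1).choose (z + 1) : ℝ) * ((z + 1 : ℕ) : ℝ)) := by ring
      _ = _ := by rw [← h]; ring

lemma sv_upper (b T L0 : ℕ) (lo hi x κ : ℝ) (hlo : 0 < lo) (hx0 : 0 < x) (hx1 : x ≤ 1)
    (hκ : 0 < κ) (hκ1 : κ ≤ 1) (hT : 0 < T)
    (H : ∀ (r n : ℕ) (w : ℝ), L0 < r → 0 ≤ w → w ≤ hi / (lo * r) → n ≤ r + b →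
      x ≤ (1 - w * (1 - x)) ^ n ∧ n * w * x ≤ (1 - κ) * (1 - w * (1 - x))) :
    ∀ (k L : ℕ) (p : ℕ → ℝ) (n y : ℕ), k ≤ T → L0 + k ≤ L → (∀ i < L, lo ≤ p i ∧ p i ≤ hi) →
      1 ≤ y → n + y = L + b →
      sv L n p y ≤ (∑ i ∈ Finset.range L, p i) ^ n *
        (1 - x ^ y * max 0 ((κ * k - y) / (κ * T))) := by
  have hT' : (0 : ℝ) < T := by exact_mod_cast hT
  intro k
  induction k with
  | zero =>
    intro L p n y _ _ hp hy _
    have : max 0 ((κ * ((0 : ℕ) : ℝ) - y) / (κ * T)) = 0 := by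
      apply max_eq_left
      apply div_nonpos_of_nonpos_of_nonneg <;> [skip; positivity]
      simp
    rw [this, mul_zero, sub_zero, mul_one]
    exact sv_le L n p y fun i hi' => hlo.le.trans (hp i hi').1
  | succ k ih =>
    intro L p n y hk hL hp hy hny
    have hp0 : ∀ i < L, 0 ≤ p i := fun i hi' => hlo.le.trans (hp i hi').1
    obtain ⟨r, rfl⟩ : ∃ r, L = r + 1 := ⟨L - 1, by omega⟩
    by_cases hc : κ * ((k + 1 : ℕ) : ℝ) - y ≤ 0
    · have : max 0 ((κ * ((k + 1 : ℕ) : ℝ) - y) / (κ * T)) = 0 := by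
        apply max_eq_left
        apply div_nonpos_of_nonpos_of_nonneg hc (by positivity)
      rw [this, mul_zero, sub_zero, mul_one]
      exact sv_le (r + 1) n p y hp0
    push Not at hc
    rw [max_eq_right (div_nonneg hc.le (by positivity))]
    set c := κ * ((k + 1 : ℕ) : ℝ) - y with hcdef
    set q' := ∑ i ∈ Finset.range r, p (i + 1) with hq'
    set q := ∑ i ∈ Finset.range (r + 1), p i with hq
    have hqq : q = p 0 + q' := by rw [hq, Finset.sum_range_succ', add_comm]
    have hq'0 : 0 ≤ q' := Finset.sum_nonneg fun i hi' => hp0 _ (by simp at hi'; omega)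
    have hp00 : lo ≤ p 0 := (hp 0 (by omega)).1
    have hpp0 : 0 < p 0 := hlo.trans_le hp00
    have hqpos : 0 < q := by linarith
    have hqge : (r + 1) * lo ≤ q := by
      calc (r + 1) * lo = ∑ i ∈ Finset.range (r + 1), lo := by simp
        _ ≤ q := Finset.sum_le_sum fun i hi' => (hp i (by simpa using hi')).1
    rw [sv_succ]
    have step : ∑ z ∈ Finset.range (n + 1), (n.choose z : ℝ) * (p 0 ^ z *
      (if 1 < y + z then sv r (n - z) (fun i => p (i + 1)) (y + z - 1) else 0)) ≤
      ∑ z ∈ Finset.range (n + 1), (n.choose z : ℝ) * (p 0 ^ z *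
        (q' ^ (n - z) * (1 - x ^ (y - 1) * x ^ z * ((c - κ + 1 - z) / (κ * T))))) := by
      refine Finset.sum_le_sum fun z hz => ?_
      have hzn : z ≤ n := by simp at hz; omega
      refine mul_le_mul_of_nonneg_left ?_ (by positivity)
      refine mul_le_mul_of_nonneg_left ?_ (by positivity)
      have hy1 : ((y + z - 1 : ℕ) : ℝ) = y + z - 1 := by
        rw [Nat.cast_sub (by omega)]; push_cast; ring
      have hcc : c - κ + 1 - z = κ * k - ((y + z - 1 : ℕ) : ℝ) := by
        rw [hy1, hcdef]; push_cast; ring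
      have hpw : x ^ (y - 1) * x ^ z = x ^ (y + z - 1) := by
        rw [← pow_add]; congr 1; omega
      rw [hcc, hpw]
      split_ifs with h1
      · refine le_trans (ih r (fun i => p (i + 1)) (n - z) (y + z - 1) (by omega) (by omega)
          (fun i hi' => hp _ (by omega)) (by omega) (by omega)) ?_
        refine mul_le_mul_of_nonneg_left ?_ (by positivity)
        have := mul_le_mul_of_nonneg_left (le_max_right 0 ((κ * k - ((y + z - 1 : ℕ) : ℝ)) / (κ * T)))
          (pow_nonneg hx0.le (y + z - 1))
        linarith
      · have h0 : y + z - 1 = 0 := by omega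
        rw [h0]
        refine mul_nonneg (by positivity) ?_
        have : (k : ℝ) ≤ T := by exact_mod_cast (by omega : k ≤ T)
        have h2 : κ * k / (κ * T) ≤ 1 := by
          rw [div_le_one (by positivity)]
          exact mul_le_mul_of_nonneg_left this hκ.le
        simpa using h2
    refine le_trans step ?_
    set D := p 0 * x + q' with hD
    have hsum : ∑ z ∈ Finset.range (n + 1), (n.choose z : ℝ) * (p 0 ^ z *
        (q' ^ (n - z) * (1 - x ^ (y - 1) * x ^ z * ((c - κ + 1 - z) / (κ * T))))) =
        q ^ n - x ^ (y - 1) / (κ * T) * ((c - κ + 1) * D ^ n - n * (p 0 * x) * D ^ (n - 1)) := by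
      rw [hD, ← sum_mul_choose, hqq, add_pow, add_pow, Finset.mul_sum, ← Finset.sum_sub_distrib, Finset.mul_sum,
        ← Finset.sum_sub_distrib]
      refine Finset.sum_congr rfl fun z _ => ?_
      rw [mul_pow]; ring
    rw [hsum]
    obtain ⟨H1, H2⟩ := H (r + 1) n (p 0 / q) (by omega) (by positivity) (by
      rw [div_le_div_iff₀ hqpos (by positivity)]
      push_cast
      have h1 := (hp 0 (by omega)).2
      have h2 : hi * ((r + 1) * lo) ≤ hi * q := mul_le_mul_of_nonneg_left hqge (by linarith)
      have h3 : p 0 * ((r + 1) * lo) ≤ hi * ((r + 1) * lo) := mul_le_mul_of_nonneg_right h1 (by positivity)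
      linarith) (by omega)
    set d := 1 - p 0 / q * (1 - x) with hd
    have hDd : D = q * d := by
      rw [hD, hd]; field_simp; rw [hqq]; ring
    have hDpos : 0 < D := by positivity
    have hDn : q ^ n * x ≤ D ^ n := by
      rw [hDd, mul_pow]
      exact mul_le_mul_of_nonneg_left H1 (by positivity)
    have hder : n * (p 0 * x) * D ^ (n - 1) ≤ (1 - κ) * D ^ n := by
      rcases n with _ | n
      · simpa using hκ1
      · rw [Nat.add_sub_cancel, pow_succ' D n, show (1 - κ) * (D * D ^ n) = (1 - κ) * D * D ^ n by ring]
        refine mul_le_mul_of_nonneg_right ?_ (by positivity)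
        rw [hDd]
        calc ((n + 1 : ℕ) : ℝ) * (p 0 * x) = q * (((n + 1 : ℕ) : ℝ) * (p 0 / q) * x) := by field_simp
          _ ≤ q * ((1 - κ) * d) := mul_le_mul_of_nonneg_left H2 hqpos.le
          _ = _ := by ring
    have hfin : q ^ n * x * c ≤ (c - κ + 1) * D ^ n - n * (p 0 * x) * D ^ (n - 1) := by
      have := mul_le_mul_of_nonneg_right hDn hc.le
      linarith
    have hxy : x ^ y = x ^ (y - 1) * x := by
      rw [← pow_succ]; congr 1; omega
    have := mul_le_mul_of_nonneg_left hfin (show 0 ≤ x ^ (y - 1) / (κ * T) by positivity)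
    have h3 : x ^ (y - 1) / (κ * T) * (q ^ n * x * c) = q ^ n * (x ^ y * (c / (κ * T))) := by
      rw [hxy]; ring
    rw [h3] at this
    linarith

lemma schedule (R : ℕ) (hR : 2 ≤ R) (B : ℝ) (hB : (R : ℝ) ^ 2 ≤ B) :
    ∃ θ : ℕ → ℝ, (∀ r, 0 ≤ θ r ∧ θ r ≤ 2 ∧ θ r * (r + 1 + B) ≤ 2 * B ∧
      θ (r + 1) ≤ θ r - (θ r - θ r ^ 2 / 2) / (r + 1)) ∧
      ∀ r, R < r → θ r = 2 * (B * (R - 1) / (R + 1)) / (r + B * (R - 1) / (R + 1)) := by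
  have hR' : (2 : ℝ) ≤ R := by exact_mod_cast hR
  have hB0 : 0 < B := by nlinarith
  set a := B * (R - 1) / (R + 1) with ha
  have ha0 : 0 < a := by
    rw [ha]; apply div_pos <;> nlinarith
  have haB : a * (R + 1) = B * (R - 1) := by rw [ha]; field_simp
  set γ : ℝ := 2 * R / ((R + 1) * (R + a)) with hγ
  have hγ0 : 0 < γ := by positivity
  have hγR : γ * (R + 1) = 2 * R / (R + a) := by rw [hγ]; field_simp
  have hγR2 : γ * (R + 1) ≤ 2 := by
    rw [hγR, div_le_iff₀ (by positivity)]; nlinarith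
  have hγB : 2 ≤ γ * (1 + B) := by
    rw [hγ, div_mul_eq_mul_div, le_div_iff₀ (by positivity)]
    nlinarith
  have hglue : 2 - γ * (R + 1) = 2 * a / (R + a) := by
    rw [hγR]; field_simp; ring
  refine ⟨fun r => if r ≤ R then 2 - γ * (r + 1) else 2 * a / (r + a), ?_, ?_⟩
  · intro r
    by_cases hr : r ≤ R
    · have hr' : (r : ℝ) ≤ R := by exact_mod_cast hr
      have h1 : γ * (r + 1) ≤ 2 := by
        refine le_trans ?_ hγR2
        exact mul_le_mul_of_nonneg_left (by linarith) hγ0.le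
      have hr0 : (0 : ℝ) ≤ r := by positivity
      simp only [hr, if_true]
      refine ⟨by linarith, by nlinarith, ?_, ?_⟩
      · have : 2 * (r + 1) ≤ γ * (1 + B) * (r + 1) := by nlinarith
        have h2 : 0 ≤ γ * r * (r + 1) := by positivity
        nlinarith
      · have hrhs : 2 - γ * (r + 1) - (2 - γ * (r + 1) - (2 - γ * (r + 1)) ^ 2 / 2) / (r + 1)
            = 2 - γ * (r + 1 + 1) + γ ^ 2 * (r + 1) / 2 := by
          field_simp; ring
        rw [hrhs]
        by_cases hr2 : r + 1 ≤ R
        · simp only [hr2, if_true]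
          push_cast
          have : 0 ≤ γ ^ 2 * ((r : ℝ) + 1) / 2 := by positivity
          linarith
        · have : r = R := by omega
          subst this
          simp only [hr2, if_false]
          push_cast
          rw [← hrhs, hglue]
          have hs : (0 : ℝ) < r + a := by positivity
          have hs1 : (0 : ℝ) < r + 1 + a := by positivity
          rw [show 2 * a / ((r : ℝ) + a) - (2 * a / (r + a) - (2 * a / (r + a)) ^ 2 / 2) / (r + 1)
            = 2 * a * ((r + a) * (r + 1) - r) / ((r + a) ^ 2 * (r + 1)) by field_simp; ring]
          rw [div_le_div_iff₀ (by positivity) (by positivity)]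
          have : ((r:ℝ) + a) ^ 2 * (r + 1) ≤ ((r + a) * (r + 1) - r) * (r + 1 + a) := by nlinarith
          nlinarith
    · have hr2 : ¬ (r + 1 ≤ R) := by omega
      have hrR : (R : ℝ) + 1 ≤ r := by exact_mod_cast (by omega : R + 1 ≤ r)
      simp only [hr, hr2, if_false]
      push_cast
      have hs : (0 : ℝ) < r + a := by positivity
      refine ⟨by positivity, ?_, ?_, ?_⟩
      · rw [div_le_iff₀ hs]; nlinarith
      · rw [div_mul_eq_mul_div, div_le_iff₀ hs]
        have h1 : a * (r + 1) ≤ B * r := by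
          have e1 : a * (r + 1) * (R + 1) = B * (R - 1) * (r + 1) := by rw [← haB]; ring
          have e2 : B * ((R - 1) * (r + 1)) ≤ B * (r * (R + 1)) := mul_le_mul_of_nonneg_left (by nlinarith) hB0.le
          have : a * (r + 1) * (R + 1) ≤ B * r * (R + 1) := by rw [e1]; linarith
          exact le_of_mul_le_mul_right this (by positivity)
        nlinarith
      · rw [show 2 * a / ((r : ℝ) + a) - (2 * a / (r + a) - (2 * a / (r + a)) ^ 2 / 2) / (r + 1)
            = 2 * a * ((r + a) * (r + 1) - r) / ((r + a) ^ 2 * (r + 1)) by field_simp; ring]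
        rw [div_le_div_iff₀ (by positivity) (by positivity)]
        have : ((r:ℝ) + a) ^ 2 * (r + 1) ≤ ((r + a) * (r + 1) - r) * (r + 1 + a) := by nlinarith
        nlinarith
  · intro r hr
    simp only [not_le.2 hr, if_false]

lemma lower_final (L m b R : ℕ) (p : ℕ → ℝ) (lo hi B : ℝ) (hlo : 0 < lo) (hlh : lo ≤ hi)
    (hp : ∀ i < L, lo ≤ p i ∧ p i ≤ hi) (hsum : ∑ i ∈ Finset.range L, p i = 1)
    (hb : m + 1 = L + b) (hR : 2 ≤ R) (hRL : R < L) (hB : (R : ℝ) ^ 2 ≤ B)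
    (hBb : B ≤ b - (1 - lo / hi) * (L + b)) :
    1 - Real.exp (-(2 * (B * (R - 1) / (R + 1)) / (L + B * (R - 1) / (R + 1)))) ≤ fixedLeftProb L m p := by
  obtain ⟨θ, h1, h2⟩ := schedule R hR B hB
  have hhi : 0 < hi := hlo.trans_le hlh
  have hρ : lo / hi ≤ 1 := (div_le_one hhi).2 hlh
  have key := sv_lower b L lo hi hlo θ (fun r _ => ⟨(h1 r).1, (h1 r).2.1⟩) (by
    intro r y hr hy
    obtain ⟨h3, h4, h5, h6⟩ := h1 r
    have hr' : (r : ℝ) + 1 ≤ L := by exact_mod_cast hr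
    have hr0 : (0 : ℝ) < r + 1 := by positivity
    have hy0 : (0 : ℝ) ≤ y := by positivity
    set φ := θ r
    have hquad : 0 ≤ φ - φ ^ 2 / 2 := by nlinarith
    have hmean : ((r : ℝ) + 1 + B - y) / (r + 1) ≤ ((r : ℝ) + 1 + b - y) * (lo / hi / (r + 1)) := by
      rw [mul_div_assoc', div_le_div_iff_of_pos_right hr0]
      have : (1 - lo / hi) * ((r : ℝ) + 1 + b - y) ≤ (1 - lo / hi) * (L + b) :=
        mul_le_mul_of_nonneg_left (by linarith) (by linarith)
      linarith
    have hm2 := mul_le_mul_of_nonneg_right hmean hquad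
    have e1 : φ ≤ (r + 1 + B) / (r + 1) * (φ - φ ^ 2 / 2) := by
      rw [div_mul_eq_mul_div, le_div_iff₀ hr0]
      nlinarith [mul_le_mul_of_nonneg_left h5 h3]
    have e2 : (φ - φ ^ 2 / 2) / (r + 1) * y ≤ (φ - θ (r + 1)) * y :=
      mul_le_mul_of_nonneg_right (by linarith) hy0
    have e3 : ((r : ℝ) + 1 + B - y) / (r + 1) * (φ - φ ^ 2 / 2) =
      (r + 1 + B) / (r + 1) * (φ - φ ^ 2 / 2) - (φ - φ ^ 2 / 2) / (r + 1) * y := by ring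
    linarith) L p m 1 le_rfl hp hb
  rw [hsum, h2 L hRL] at key
  rw [fixedLeft_eq]
  simpa using key

lemma upper_final (L m b T : ℕ) (p : ℕ → ℝ) (lo hi x κ lam : ℝ) (hlo : 0 < lo) (hlh : lo ≤ hi)
    (hp : ∀ i < L, lo ≤ p i ∧ p i ≤ hi) (hsum : ∑ i ∈ Finset.range L, p i = 1)
    (hb : m + 1 = L + b) (hT : 0 < T) (hTL : T ≤ L) (hx0 : 0 < x) (hx1 : x ≤ 1)
    (hκ : 0 < κ) (hκ1 : κ ≤ 1)
    (hlam : ∀ r : ℕ, L - T < r → (1 + b / r) * (hi / lo) ≤ 1 + lam)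
    (a : ℝ) (ha1 : a < 1) (ha : ∀ r : ℕ, L - T < r → hi / (lo * r) * (1 - x) ≤ a)
    (h1 : (1 + lam) ≤ (1 + (1 - x) / 2) * (1 - a))
    (h2 : (1 + lam) * x ≤ (1 - κ) * (1 - a)) :
    fixedLeftProb L m p ≤ (1 - x) + 1 / (κ * T) := by
  have hhi : 0 < hi := hlo.trans_le hlh
  have key := sv_upper b T (L - T) lo hi x κ hlo hx0 hx1 hκ hκ1 hT (by
    intro r n w hr hw0 hw hn
    have hr0 : (0 : ℝ) < r := by exact_mod_cast (by omega : 0 < r)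
    have hn' : (n : ℝ) ≤ r + b := by exact_mod_cast hn
    have hnw : n * w ≤ 1 + lam := by
      refine le_trans ?_ (hlam r hr)
      calc (n : ℝ) * w ≤ (r + b) * (hi / (lo * r)) := mul_le_mul hn' hw hw0 (by positivity)
        _ = _ := by field_simp
    have hwa : w * (1 - x) ≤ a :=
      le_trans (mul_le_mul_of_nonneg_right hw (by linarith)) (ha r hr)
    have hwn : 0 ≤ w * (1 - x) := mul_nonneg hw0 (by linarith)
    constructor
    · set t := w * (1 - x) with ht
      have hpos : 0 < 1 - t := by linarith
      have l1 : -(t / (1 - t)) ≤ Real.log (1 - t) := by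
        have := Real.one_sub_inv_le_log_of_pos hpos
        have e : 1 - (1 - t)⁻¹ = -(t / (1 - t)) := by field_simp; ring
        linarith
      have l2 : Real.log x ≤ -((1 - x) + (1 - x) ^ 2 / 2) := by
        have hs := Real.hasSum_pow_div_log_of_abs_lt_one (x := 1 - x) (by rw [abs_lt]; constructor <;> linarith)
        have := sum_le_hasSum (Finset.range 2) (fun i _ => by
          have : 0 ≤ 1 - x := by linarith
          positivity) hs
        simp [Finset.sum_range_succ] at this
        norm_num at this
        linarith
      have hlog : Real.log x ≤ n * Real.log (1 - t) := by
        have hnt : n * (t / (1 - t)) ≤ (1 - x) + (1 - x) ^ 2 / 2 := by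
          rw [mul_div_assoc', div_le_iff₀ hpos]
          have e1 : n * t = n * w * (1 - x) := by rw [ht]; ring
          rw [e1]
          have e2 : n * w ≤ (1 + (1 - x) / 2) * (1 - t) := by
            have : (1 + (1 - x) / 2) * (1 - a) ≤ (1 + (1 - x) / 2) * (1 - t) :=
              mul_le_mul_of_nonneg_left (by linarith) (by linarith)
            linarith
          have := mul_le_mul_of_nonneg_right e2 (show 0 ≤ 1 - x by linarith)
          linarith
        have := mul_le_mul_of_nonneg_left l1 (show (0 : ℝ) ≤ n by positivity)
        linarith
      rw [← Real.log_pow] at hlog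
      exact (Real.log_le_log_iff hx0 (by positivity)).1 hlog
    · have := mul_le_mul_of_nonneg_right hnw hx0.le
      have h3 : (1 - κ) * (1 - a) ≤ (1 - κ) * (1 - w * (1 - x)) :=
        mul_le_mul_of_nonneg_left (by linarith) (by linarith)
      linarith) T L p m 1 le_rfl (by omega) hp le_rfl hb
  rw [hsum] at key
  rw [fixedLeft_eq]
  refine key.trans ?_
  have hT' : (0 : ℝ) < T := by exact_mod_cast hT
  have e : (κ * T - ((1 : ℕ) : ℝ)) / (κ * T) = 1 - 1 / (κ * T) := by
    push_cast; field_simp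
  have := mul_le_mul_of_nonneg_left (le_max_right 0 ((κ * T - ((1 : ℕ) : ℝ)) / (κ * T))) hx0.le
  rw [e] at this
  have hpos : 0 < 1 / (κ * T) := by positivity
  rw [one_pow, one_mul, pow_one, e]
  nlinarith

set_option maxHeartbeats 3000000 in
lemma main_bounds (L m R : ℕ) (p : ℕ → ℝ) (e δ : ℝ) (he : 0 < e) (heδ : e ≤ δ) (hδ : δ ≤ 1 / 20)
    (hR : 2 ≤ R) (hRδ : 2 ≤ δ * (R + 1)) (hRL : R < L) (hRB : (R : ℝ) ^ 2 ≤ (1 - 5 * δ) * (L * e))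
    (hp : ∀ i < L, |p i - (L : ℝ)⁻¹| ≤ δ * e / L) (hsum : ∑ i ∈ Finset.range L, p i = 1)
    (hm : |(m : ℝ) - L * (1 + e)| ≤ δ * (L * e)) (h1 : 1 ≤ δ * (L * e)) (h8 : 8 ≤ δ * L)
    (h4 : 4 ≤ δ ^ 2 * (L * e ^ 2)) :
    1 - 8 * δ ≤ fixedLeftProb L m p / (2 * e) ∧ fixedLeftProb L m p / (2 * e) ≤ 1 + 11 * δ := by
  have hδ0 : 0 < δ := he.trans_le heδ
  have hL0 : (0 : ℝ) < L := by exact_mod_cast (by omega : 0 < L)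
  have hLe : 0 < L * e := by positivity
  have hδe : δ * e ≤ 1 / 400 := by nlinarith
  have hδe0 : 0 < δ * e := by positivity
  obtain ⟨hm1, hm2⟩ := abs_le.1 hm
  have hmL : L ≤ m := by
    have : (L : ℝ) ≤ m := by nlinarith
    exact_mod_cast this
  obtain ⟨b, hb⟩ : ∃ b, m + 1 = L + b := ⟨m + 1 - L, by omega⟩
  have hbr : (b : ℝ) = m + 1 - L := by
    have : ((m + 1 : ℕ) : ℝ) = ((L + b : ℕ) : ℝ) := by rw [hb]
    push_cast at this; linarith
  have hb1 : (1 - δ) * (L * e) ≤ b := by rw [hbr]; linarith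
  have hb2 : (b : ℝ) ≤ (1 + 2 * δ) * (L * e) := by rw [hbr]; linarith
  set lo : ℝ := (1 - δ * e) / L with hlo
  set hi : ℝ := (1 + δ * e) / L with hhi
  have hlo0 : 0 < lo := div_pos (by linarith) hL0
  have hlh : lo ≤ hi := by
    rw [hlo, hhi]; gcongr; linarith
  have hpp : ∀ i < L, lo ≤ p i ∧ p i ≤ hi := by
    intro i hi'
    obtain ⟨a1, a2⟩ := abs_le.1 (hp i hi')
    have e1 : lo = (L : ℝ)⁻¹ - δ * e / L := by rw [hlo]; field_simp
    have e2 : hi = (L : ℝ)⁻¹ + δ * e / L := by rw [hhi]; field_simp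
    rw [e1, e2]
    constructor <;> linarith
  constructor
  · have hρ : lo / hi = (1 - δ * e) / (1 + δ * e) := by
      rw [hlo, hhi]; field_simp
    have hρ2 : 1 - lo / hi ≤ 2 * (δ * e) := by
      rw [hρ, sub_le_iff_le_add, ← sub_le_iff_le_add', le_div_iff₀ (by linarith)]
      nlinarith
    have hρ0 : 0 ≤ 1 - lo / hi := by
      have := (div_le_one (hlo0.trans_le hlh)).2 hlh
      linarith
    have hbL : (b : ℝ) ≤ L := by nlinarith
    have key := lower_final L m b R p lo hi ((1 - 5 * δ) * (L * e)) hlo0 hlh hpp hsum hb hR hRL hRB (by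
      have : (1 - lo / hi) * (L + b) ≤ 2 * (δ * e) * (2 * L) :=
        mul_le_mul hρ2 (by linarith) (by positivity) (by linarith)
      linarith)
    set c : ℝ := (1 - 5 * δ) * ((R - 1) / (R + 1)) with hc
    have hR' : (2 : ℝ) ≤ R := by exact_mod_cast hR
    have hRR : 1 - δ ≤ ((R : ℝ) - 1) / (R + 1) := by
      rw [le_div_iff₀ (by positivity)]; linarith
    have hRR1 : ((R : ℝ) - 1) / (R + 1) ≤ 1 := by
      rw [div_le_one (by positivity)]; linarith
    have hc0 : 1 - 6 * δ ≤ c := by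
      have : (1 - 5 * δ) * (1 - δ) ≤ c := mul_le_mul_of_nonneg_left hRR (by linarith)
      nlinarith
    have hc1 : c ≤ 1 := by
      have : c ≤ (1 - 5 * δ) * 1 := mul_le_mul_of_nonneg_left hRR1 (by linarith)
      linarith
    have hcpos : 0 < c := by linarith
    have hu : 2 * ((1 - 5 * δ) * (L * e) * (R - 1) / (R + 1)) / (L + (1 - 5 * δ) * (L * e) * (R - 1) / (R + 1))
        = 2 * c * e / (1 + c * e) := by
      have : (1 - 5 * δ) * (L * e) * (R - 1) / (R + 1) = c * (L * e) := by rw [hc]; ring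
      rw [this]
      have : 0 < 1 + c * e := by positivity
      field_simp
    rw [hu] at key
    set u := 2 * c * e / (1 + c * e) with hudef
    have hu0 : 0 ≤ u := by positivity
    have hce : c * e ≤ e := by nlinarith
    have hce0 : 0 < c * e := by positivity
    have hcee : 0 < c * e * e := by positivity
    have hu1 : 2 * c * e * (1 - e) ≤ u := by
      rw [hudef, le_div_iff₀ (by positivity)]
      have h9 : (1 - e) * (1 + c * e) ≤ 1 := by linarith
      have := mul_le_mul_of_nonneg_left h9 hce0.le
      linarith
    have hu2 : u ≤ 2 * e := by
      rw [hudef, div_le_iff₀ (by positivity)]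
      linarith
    have hq := exp_neg_le_quad u hu0
    rw [le_div_iff₀ (by positivity)]
    have : u ^ 2 ≤ (2 * e) ^ 2 := pow_le_pow_left₀ hu0 hu2 2
    have h5 : (1 - 6 * δ) * e ≤ c * e := mul_le_mul_of_nonneg_right hc0 he.le
    have h6 : c * e * e ≤ 1 * e * e := by gcongr
    have h7 : e * e ≤ δ * e := mul_le_mul_of_nonneg_right heδ he.le
    linarith
  · set T := ⌊δ * L⌋₊ with hT
    have hT1 : (T : ℝ) ≤ δ * L := Nat.floor_le (by positivity)
    have hT2 : δ * L < T + 1 := Nat.lt_floor_add_one _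
    have hT3 : δ * L / 2 ≤ T := by linarith
    have hTpos : (0 : ℝ) < T := by linarith
    have hTL : T ≤ L := by
      have : (T : ℝ) ≤ L := by nlinarith
      exact_mod_cast this
    have hhl : hi / lo = (1 + δ * e) / (1 - δ * e) := by
      rw [hlo, hhi]; field_simp
    have hhl2 : hi / lo ≤ 1 + 3 * (δ * e) := by
      rw [hhl, div_le_iff₀ (by linarith)]; nlinarith
    have hhl0 : 0 < hi / lo := div_pos (hlo0.trans_le hlh) hlo0
    have hr : ∀ r : ℕ, L - T < r → (1 - δ) * L ≤ r := by
      intro r hr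
      have : (L : ℝ) ≤ r + T := by exact_mod_cast (by omega : L ≤ r + T)
      linarith
    have hδe2 : δ * e ≤ e / 20 := by nlinarith
    have he20 : e ≤ 1 / 20 := by linarith
    have hee : δ * e * e ≤ δ * e / 20 := by nlinarith
    have hee2 : δ * (δ * e) ≤ δ * e / 20 := by nlinarith
    have key := upper_final L m b T p lo hi (1 - 2 * (1 + 10 * δ) * e) (e / 4) ((1 + 8 * δ) * e) hlo0 hlh hpp hsum hb
      (by exact_mod_cast hTpos) hTL (by nlinarith) (by nlinarith) (by linarith) (by linarith)
      (by
        intro r hr'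
        have hrr := hr r hr'
        have hr0 : (0 : ℝ) < r := lt_of_lt_of_le (by nlinarith) hrr
        have hbr2 : (b : ℝ) / r ≤ (1 + 4 * δ) * e := by
          rw [div_le_iff₀ hr0]
          have h3 : (1 + 4 * δ) * e * ((1 - δ) * L) ≤ (1 + 4 * δ) * e * r :=
            mul_le_mul_of_nonneg_left hrr (by positivity)
          have h5 : (1 + 2 * δ) * (L * e) ≤ (1 + 4 * δ) * (1 - δ) * (L * e) :=
            mul_le_mul_of_nonneg_right (by nlinarith) hLe.le
          linarith
        calc (1 + b / r) * (hi / lo) ≤ (1 + (1 + 4 * δ) * e) * (1 + 3 * (δ * e)) :=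
              mul_le_mul (by linarith) hhl2 hhl0.le (by positivity)
          _ ≤ _ := by nlinarith)
      (δ * e) (by linarith)
      (by
        intro r hr'
        have hrr := hr r hr'
        have hr0 : (0 : ℝ) < r := lt_of_lt_of_le (by nlinarith) hrr
        have h3 : hi / (lo * r) ≤ 2 / L := by
          rw [← div_div, div_le_div_iff₀ hr0 hL0]
          have : hi / lo * L ≤ (1 + 3 * (δ * e)) * L := mul_le_mul_of_nonneg_right hhl2 hL0.le
          nlinarith
        have h5 : 1 - (1 - 2 * (1 + 10 * δ) * e) ≤ 4 * e := by nlinarith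
        calc hi / (lo * r) * (1 - (1 - 2 * (1 + 10 * δ) * e)) ≤ 2 / L * (4 * e) :=
              mul_le_mul h3 h5 (by nlinarith) (by positivity)
          _ = 8 / L * e := by ring
          _ ≤ δ * e := by
            refine mul_le_mul_of_nonneg_right ?_ he.le
            rw [div_le_iff₀ hL0]; exact h8)
      (by nlinarith)
      (by nlinarith)
    rw [div_le_iff₀ (by positivity)]
    have hlast : 1 / (e / 4 * T) ≤ 2 * (δ * e) := by
      rw [div_le_iff₀ (by positivity)]
      have : 2 * (δ * e) * (e / 4 * (δ * L / 2)) ≤ 2 * (δ * e) * (e / 4 * T) := by gcongr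
      nlinarith
    linarith
/-- Proposition `t24`: let `ε = ε(n) → 0⁺`, `L = L(n) → ∞` with
`L ε² → ∞`, let `m = m(n)` be integers with `m = L(1 + ε + o(ε))`, and let
`p_1, …, p_L` be probabilities summing to `1` with `p_i = 1/L + o(ε/L)` uniformly
in `i`.  Placing exactly `m` balls independently into the `L` bins according to
these probabilities, the probability `f(m)` of `ESC_L` satisfies `f(m) ∼ 2ε`. -/
theorem fixedLeft_asymp (ε : ℕ → ℝ) (L m : ℕ → ℕ) (p : ℕ → ℕ → ℝ)
    (hεpos : ∀ n, 0 < ε n) (hε0 : Tendsto ε atTop (𝓝 0))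
    (hL : Tendsto L atTop atTop)
    (hLε : Tendsto (fun n : ℕ => (L n : ℝ) * ε n ^ 2) atTop atTop)
    (hm : Tendsto (fun n : ℕ => ((m n : ℝ) - L n * (1 + ε n)) / (L n * ε n))
      atTop (𝓝 0))
    (hpnn : ∀ n, ∀ i < L n, 0 ≤ p n i)
    (hpsum : ∀ n, ∑ i ∈ Finset.range (L n), p n i = 1)
    (hpunif : ∀ δ : ℝ, 0 < δ → ∀ᶠ n in atTop, ∀ i < L n,
        |p n i - (L n : ℝ)⁻¹| ≤ δ * ε n / L n) :
    Tendsto (fun n : ℕ => fixedLeftProb (L n) (m n) (p n) / (2 * ε n))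
      atTop (𝓝 1) := by
  have hmain : ∀ δ : ℝ, 0 < δ → δ ≤ 1 / 20 → ∀ᶠ n in atTop,
      1 - 8 * δ ≤ fixedLeftProb (L n) (m n) (p n) / (2 * ε n) ∧
      fixedLeftProb (L n) (m n) (p n) / (2 * ε n) ≤ 1 + 11 * δ := by
    intro δ hδ hδ2
    obtain ⟨R, hR⟩ := exists_nat_ge (2 / δ)
    have hRδ : 2 ≤ δ * ((R : ℝ) + 1) := by
      rw [div_le_iff₀ hδ] at hR; nlinarith
    have hR2 : 2 ≤ R := by
      have : (2 : ℝ) ≤ R := by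
        refine le_trans ?_ hR
        rw [le_div_iff₀ hδ]; linarith
      exact_mod_cast this
    have E1 : ∀ᶠ n in atTop, ε n ≤ δ := hε0.eventually_le_const hδ
    have E2 := hpunif δ hδ
    have E3 : ∀ᶠ n in atTop, |((m n : ℝ) - L n * (1 + ε n)) / (L n * ε n)| < δ := by
      have := (Metric.tendsto_nhds.1 hm) δ hδ
      simpa only [Real.dist_eq, sub_zero] using this
    have E4 := hLε.eventually_ge_atTop (4 / δ ^ 2 + 1 / δ + (R : ℝ) ^ 2 / (1 - 5 * δ))
    have E5 := hL.eventually_gt_atTop R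
    have E6 := (tendsto_natCast_atTop_atTop (R := ℝ)).comp hL |>.eventually_ge_atTop (8 / δ)
    filter_upwards [E1, E2, E3, E4, E5, E6] with n h1 h2 h3 h4 h5 h6
    have he := hεpos n
    have hL0 : (0 : ℝ) < L n := by exact_mod_cast (by omega : 0 < L n)
    have hd5 : 0 < 1 - 5 * δ := by linarith
    have hLL : (L n : ℝ) * ε n ^ 2 ≤ L n * ε n := by
      refine mul_le_mul_of_nonneg_left ?_ hL0.le
      nlinarith
    have a1 : 0 < 4 / δ ^ 2 := by positivity
    have a2 : 0 < 1 / δ := by positivity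
    have a3 : 0 ≤ (R : ℝ) ^ 2 / (1 - 5 * δ) := by positivity
    refine main_bounds (L n) (m n) R (p n) (ε n) δ he h1 hδ2 hR2 hRδ h5 ?_ h2 (hpsum n) ?_ ?_ ?_ ?_
    · have : (R : ℝ) ^ 2 / (1 - 5 * δ) ≤ L n * ε n := by linarith
      rw [div_le_iff₀ hd5] at this
      linarith
    · rw [abs_div, abs_of_pos (by positivity : 0 < (L n : ℝ) * ε n), div_lt_iff₀ (by positivity)] at h3
      exact h3.le
    · have : 1 / δ ≤ L n * ε n := by linarith
      rw [div_le_iff₀ hδ] at this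
      linarith
    · simp only [Function.comp] at h6
      rw [div_le_iff₀ hδ] at h6
      linarith
    · have : 4 / δ ^ 2 ≤ L n * ε n ^ 2 := by linarith
      rw [div_le_iff₀ (by positivity)] at this
      linarith
  rw [Metric.tendsto_nhds]
  intro η hη
  have hδ : 0 < min (1 / 20) (η / 12) := by positivity
  filter_upwards [hmain _ hδ (min_le_left _ _)] with n hn
  have := min_le_right (1 / 20) (η / 12)
  rw [Real.dist_eq, abs_lt]
  constructor <;> linarith [hn.1, hn.2]
end

section
/- Let M = M(n) → ∞ and s = s(n) → ∞, and let A = A(n), B = B(n) be positive integers with A ≥ s√M and B ≥ s√M and M + B - A ≥ 0. Place M + B - A balls independently and uniformly at random into bins 1,…,M, let Z_i be the number of balls in bin i, and define the walk Y_0 = A, Y_i = Y_{i-1} + Z_i - 1 for 1 ≤ i ≤ M (so Y_M = B). Let MIN = min_{0 ≤ i ≤ M} Y_i. Then Pr[MIN ≤ 0] → 0. -/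
open Filter Topology Real Finset

/-- Place `M + B - A` balls independently and uniformly at random into bins `1,…,M`.
With `Z_i` the number of balls in bin `i` and the walk `Y_0 = A`,
`Y_i = Y_{i-1} + Z_i - 1` (so `Y_t = A + #{j : ball j in first t bins} - t`),
this is the probability that `MIN = min_{0 ≤ i ≤ M} Y_i ≤ 0`. -/
noncomputable def bridgeMinProb (M A B : ℕ) : ℝ :=
  ∑ ω : Fin (M + B - A) → Fin M, ((M : ℝ))⁻¹ ^ (M + B - A) *
    ind (∃ t ≤ M,
      (A : ℝ) + ((Finset.univ.filter (fun j => ((ω j : ℕ) < t))).card : ℝ) - t ≤ 0)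

section Helpers

variable {ι : Type} {M : ℕ}

/-- number of balls of `J` in bins with index at least `t` -/
noncomputable def WW (J : Finset ι) (t : ℕ) (ω : ι → Fin M) : ℝ :=
  ∑ j ∈ J, if t ≤ (ω j : ℕ) then 1 else 0

/-- number of balls of `J` in bin `b` -/
noncomputable def ZZ (J : Finset ι) (b : Fin M) (ω : ι → Fin M) : ℝ :=
  ∑ j ∈ J, if ω j = b then 1 else 0

/-- centred average load of the bins with index at least `t` -/
noncomputable def DD (J : Finset ι) (t : ℕ) (ω : ι → Fin M) : ℝ :=
  WW J t ω / ((M : ℝ) - t) - (J.card : ℝ) / M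

lemma WW_swap (J : Finset ι) (t u : ℕ) (hu : u ≤ t) (b b' : Fin M) (hb : t ≤ b) (hb' : t ≤ b')
    (ω : ι → Fin M) : WW J u (fun j => Equiv.swap b b' (ω j)) = WW J u ω := by
  unfold WW
  refine Finset.sum_congr rfl fun j _ => ?_
  have : (u ≤ (Equiv.swap b b' (ω j) : ℕ)) ↔ u ≤ (ω j : ℕ) := by
    rw [Equiv.swap_apply_def]
    split_ifs with h1 h2
    · subst h1; constructor <;> intro <;> omega
    · subst h2; constructor <;> intro <;> omega
    · rfl
  simp [this]

lemma ZZ_swap (J : Finset ι) (b b' : Fin M)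
    (ω : ι → Fin M) : ZZ J b (fun j => Equiv.swap b b' (ω j)) = ZZ J b' ω := by
  unfold ZZ
  refine Finset.sum_congr rfl fun j _ => ?_
  have : (Equiv.swap b b' (ω j) = b) ↔ ω j = b' := by
    rw [Equiv.swap_apply_eq_iff, Equiv.swap_apply_left]
  simp [this]

lemma WW_eq (J : Finset ι) (t : ℕ) (ω : ι → Fin M) :
    WW J t ω = ∑ b ∈ Finset.univ.filter (fun b : Fin M => t ≤ (b : ℕ)), ZZ J b ω := by
  unfold WW ZZ
  rw [Finset.sum_comm]
  refine Finset.sum_congr rfl fun j _ => ?_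
  rw [Finset.sum_ite_eq]
  simp

lemma sum_swap [Fintype ι] [DecidableEq ι] (b b' : Fin M) (f : (ι → Fin M) → ℝ) :
    ∑ ω : ι → Fin M, f (fun j => Equiv.swap b b' (ω j)) = ∑ ω, f ω :=
  Equiv.sum_comp (Equiv.arrowCongr (Equiv.refl ι) (Equiv.swap b b')) f

lemma card_ge (t : ℕ) (ht : t ≤ M) :
    ((Finset.univ.filter (fun b : Fin M => t ≤ (b : ℕ))).card : ℝ) = (M : ℝ) - t := by
  have h1 : (Finset.univ.filter (fun b : Fin M => t ≤ (b : ℕ))).card = M - t := by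
    rw [← Finset.card_map Fin.valEmbedding]
    have : (Finset.univ.filter (fun b : Fin M => t ≤ (b : ℕ))).map Fin.valEmbedding
        = Finset.Ico t M := by
      ext x
      simp only [Finset.mem_map, Finset.mem_filter, Finset.mem_univ, true_and,
        Fin.valEmbedding_apply, Finset.mem_Ico]
      constructor
      · rintro ⟨a, h, rfl⟩; exact ⟨h, a.2⟩
      · rintro ⟨h, h'⟩; exact ⟨⟨x, h'⟩, h, rfl⟩
    rw [this, Nat.card_Ico]
  rw [h1, Nat.cast_sub ht]

lemma exch [Fintype ι] [DecidableEq ι] (J : Finset ι) (t : ℕ) (ht : t < M) (g : (ι → Fin M) → ℝ)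
    (hg : ∀ b b' : Fin M, t ≤ b → t ≤ b' → ∀ ω, g (fun j => Equiv.swap b b' (ω j)) = g ω) :
    ∑ ω, g ω * WW J t ω = ((M : ℝ) - t) * ∑ ω, g ω * ZZ J ⟨t, ht⟩ ω := by
  simp_rw [WW_eq, Finset.mul_sum]
  rw [Finset.sum_comm]
  rw [← card_ge t ht.le, ← Finset.mul_sum, ← nsmul_eq_mul]
  apply Finset.sum_eq_card_nsmul
  intro b hb
  simp only [Finset.mem_filter, Finset.mem_univ, true_and] at hb
  rw [← sum_swap ⟨t, ht⟩ b]
  refine Finset.sum_congr rfl fun ω _ => ?_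
  rw [hg _ _ le_rfl hb]
  congr 1
  rw [Equiv.swap_comm, ZZ_swap]

lemma WW_succ (J : Finset ι) (t : ℕ) (ht : t < M) (ω : ι → Fin M) :
    WW J (t+1) ω = WW J t ω - ZZ J ⟨t, ht⟩ ω := by
  unfold WW ZZ
  rw [← Finset.sum_sub_distrib]
  refine Finset.sum_congr rfl fun j _ => ?_
  have : ω j = ⟨t, ht⟩ ↔ (ω j : ℕ) = t := by rw [Fin.ext_iff]
  simp only [this]
  split_ifs <;> first | omega | norm_num

lemma mart [Fintype ι] [DecidableEq ι] (J : Finset ι) (t : ℕ) (ht : t + 1 < M) (g : (ι → Fin M) → ℝ)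
    (hg : ∀ b b' : Fin M, t ≤ b → t ≤ b' → ∀ ω, g (fun j => Equiv.swap b b' (ω j)) = g ω) :
    ∑ ω, g ω * (DD J (t+1) ω - DD J t ω) = 0 := by
  have h := exch J t (by omega) g hg
  have h1 : (0:ℝ) < (M:ℝ) - t - 1 := by
    have : ((t + 1 : ℕ) : ℝ) < M := by exact_mod_cast ht
    push_cast at this; linarith
  have : ∀ ω, g ω * (DD J (t+1) ω - DD J t ω) =
     (g ω * WW J t ω) * (1 / ((M:ℝ) - t - 1) - 1 / ((M:ℝ) - t))
       - g ω * ZZ J ⟨t, by omega⟩ ω * (1 / ((M:ℝ) - t - 1)) := by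
    intro ω
    unfold DD
    rw [WW_succ J t (by omega)]
    push_cast
    rw [← sub_sub]
    ring
  simp_rw [this]
  rw [Finset.sum_sub_distrib, ← Finset.sum_mul, ← Finset.sum_mul, h]
  have h2 : (0:ℝ) < (M:ℝ) - t := by linarith
  field_simp
  ring

/-- bad event up to time `m` -/
def Bad (J : Finset ι) (lam : ℝ) (m : ℕ) (ω : ι → Fin M) : Prop :=
  ∃ u ≤ m, lam ≤ |DD J u ω|

lemma DD_swap (J : Finset ι) (t u : ℕ) (hu : u ≤ t) (b b' : Fin M) (hb : t ≤ b) (hb' : t ≤ b')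
    (ω : ι → Fin M) : DD J u (fun j => Equiv.swap b b' (ω j)) = DD J u ω := by
  unfold DD; rw [WW_swap J t u hu b b' hb hb']

lemma Bad_swap (J : Finset ι) (lam : ℝ) (t : ℕ) (b b' : Fin M) (hb : t ≤ b) (hb' : t ≤ b')
    (ω : ι → Fin M) : Bad J lam t (fun j => Equiv.swap b b' (ω j)) ↔ Bad J lam t ω := by
  unfold Bad
  refine exists_congr fun u => and_congr_right fun hu => ?_
  rw [DD_swap J t u hu b b' hb hb']

lemma kolm [Fintype ι] [DecidableEq ι] (J : Finset ι) (lam : ℝ) (hlam : 0 ≤ lam) (m : ℕ) (hm : m < M) :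
    lam ^ 2 * ∑ ω : ι → Fin M, ind (Bad J lam m ω)
      ≤ ∑ ω : ι → Fin M, ind (Bad J lam m ω) * (DD J m ω) ^ 2 := by
  have sq : ∀ (x : ℝ), lam ≤ |x| → lam ^ 2 ≤ x ^ 2 := by
    intro x hx
    rw [← sq_abs x]
    exact pow_le_pow_left₀ hlam hx 2
  induction m with
  | zero =>
    rw [Finset.mul_sum]
    refine Finset.sum_le_sum fun ω _ => ?_
    unfold ind
    split_ifs with h
    · obtain ⟨u, hu, h⟩ := h
      obtain rfl : u = 0 := by omega
      have := sq _ h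
      linarith
    · simp
  | succ t ih =>
    have ih := ih (by omega)
    have hmart := mart J t hm (fun ω => ind (Bad J lam t ω) * DD J t ω) (by
      intro b b' hb hb' ω
      simp only [Bad_swap J lam t b b' hb hb', DD_swap J t t le_rfl b b' hb hb'])
    have key : ∀ ω : ι → Fin M,
        lam ^ 2 * ind (Bad J lam (t+1) ω) - lam ^ 2 * ind (Bad J lam t ω)
          + ind (Bad J lam t ω) * (DD J t ω) ^ 2
          + 2 * (ind (Bad J lam t ω) * DD J t ω * (DD J (t+1) ω - DD J t ω))
        ≤ ind (Bad J lam (t+1) ω) * (DD J (t+1) ω) ^ 2 := by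
      intro ω
      by_cases h : Bad J lam t ω
      · have h' : Bad J lam (t+1) ω := by
          obtain ⟨u, hu, h⟩ := h
          exact ⟨u, by omega, h⟩
        simp only [ind, h, h', if_true]
        nlinarith [sq_nonneg (DD J (t+1) ω - DD J t ω)]
      · by_cases h' : Bad J lam (t+1) ω
        · simp only [ind, h, h', if_true, if_false]
          obtain ⟨u, hu, h2⟩ := h'
          have : u = t + 1 := by
            by_contra hne
            exact h ⟨u, by omega, h2⟩
          subst this
          have := sq _ h2
          linarith
        · simp [ind, h, h']
    have := Finset.sum_le_sum (s := Finset.univ) (fun ω _ => key ω)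
    simp only [Finset.sum_add_distrib, Finset.sum_sub_distrib, ← Finset.mul_sum] at this
    rw [hmart] at this
    linarith

lemma offdiag [Fintype ι] [DecidableEq ι] (X : Fin M → ℝ) (hX : ∑ a, X a = 0) (i j : ι) (hij : i ≠ j) :
    ∑ ω : ι → Fin M, X (ω i) * X (ω j) = 0 := by
  have h := Fintype.prod_sum (fun (x : ι) (a : Fin M) =>
    (if x = i then X a else 1) * (if x = j then X a else 1))
  simp only [Finset.prod_mul_distrib, Finset.prod_ite_eq', Finset.mem_univ, if_true] at h
  rw [← h]
  apply Finset.prod_eq_zero (Finset.mem_univ i)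
  simp [hij, hX]

lemma var_bound [Fintype ι] [DecidableEq ι] (X : Fin M → ℝ) (hX : ∑ a, X a = 0) (hX1 : ∀ a, |X a| ≤ 1) (J : Finset ι) :
    ∑ ω : ι → Fin M, (∑ j ∈ J, X (ω j)) ^ 2 ≤ J.card * (M : ℝ) ^ (Fintype.card ι) := by
  have : ∀ ω : ι → Fin M, (∑ j ∈ J, X (ω j)) ^ 2 = ∑ i ∈ J, ∑ j ∈ J, X (ω i) * X (ω j) := by
    intro ω
    rw [pow_two, Finset.sum_mul_sum]
  simp_rw [this]
  rw [Finset.sum_comm]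
  rw [← nsmul_eq_mul]
  apply Finset.sum_le_card_nsmul
  intro i hi
  rw [Finset.sum_comm]
  rw [Finset.sum_eq_single i]
  · calc ∑ ω : ι → Fin M, X (ω i) * X (ω i) ≤ ∑ ω : ι → Fin M, (1:ℝ) := by
          refine Finset.sum_le_sum fun ω _ => ?_
          have := hX1 (ω i)
          rw [abs_le] at this
          nlinarith
      _ = _ := by simp
  · intro j _ hj
    exact offdiag X hX i j (Ne.symm hj)
  · intro h; exact absurd hi h

lemma DD_var [Fintype ι] [DecidableEq ι] (J : Finset ι) (m : ℕ) (hm : m < M) :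
    ∑ ω : ι → Fin M, (DD J m ω) ^ 2
      ≤ J.card * (M : ℝ) ^ (Fintype.card ι) / ((M : ℝ) - m) ^ 2 := by
  have h1 : (0:ℝ) < (M:ℝ) - m := by
    have : ((m : ℕ) : ℝ) < M := by exact_mod_cast hm
    linarith
  have hM : (0:ℝ) < M := by
    have : (0:ℝ) ≤ m := Nat.cast_nonneg m
    linarith
  let X : Fin M → ℝ := fun a => (if m ≤ (a:ℕ) then 1 else 0) - ((M:ℝ) - m) / M
  have hp0 : 0 ≤ ((M:ℝ) - m) / M := by positivity
  have hp1 : ((M:ℝ) - m) / M ≤ 1 := by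
    rw [div_le_one hM]
    have : (0:ℝ) ≤ m := Nat.cast_nonneg m
    linarith
  have hX : ∑ a, X a = 0 := by
    simp only [X, Finset.sum_sub_distrib]
    rw [Finset.sum_boole, card_ge m hm.le]
    simp
    field_simp
    ring
  have hX1 : ∀ a, |X a| ≤ 1 := by
    intro a
    simp only [X]
    rw [abs_le]
    split_ifs <;> constructor <;> linarith
  have hv := var_bound X hX hX1 J
  have : ∀ ω : ι → Fin M, (DD J m ω) ^ 2 = (∑ j ∈ J, X (ω j)) ^ 2 / ((M : ℝ) - m) ^ 2 := by
    intro ω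
    rw [← div_pow]
    congr 1
    simp only [X, Finset.sum_sub_distrib, DD, WW]
    simp
    field_simp
  simp_rw [this]
  rw [← Finset.sum_div]
  gcongr

lemma ind_nonneg (P : Prop) : 0 ≤ ind P := by
  unfold ind; split_ifs <;> norm_num

lemma ind_le_one (P : Prop) : ind P ≤ 1 := by
  unfold ind; split_ifs <;> norm_num

lemma bad_bound [Fintype ι] [DecidableEq ι] (J : Finset ι) (hM : 0 < M) (hJ : J.card ≤ M) (s : ℝ) (hs : 0 < s) :
    ∑ ω : ι → Fin M, ind (Bad J (s / √M) (M / 2) ω)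
      ≤ 4 / s ^ 2 * (M : ℝ) ^ (Fintype.card ι) := by
  have hm : M / 2 < M := by omega
  have hMr : (0:ℝ) < M := by exact_mod_cast hM
  have h1 := kolm (M := M) J (s / √M) (by positivity) (M / 2) hm
  have h2 : ∑ ω : ι → Fin M, ind (Bad J (s / √M) (M / 2) ω) * (DD J (M / 2) ω) ^ 2
      ≤ ∑ ω : ι → Fin M, (DD J (M / 2) ω) ^ 2 := by
    refine Finset.sum_le_sum fun ω _ => ?_
    nlinarith [ind_le_one (Bad J (s / √M) (M / 2) ω), sq_nonneg (DD J (M / 2) ω)]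
  have h3 := DD_var (M := M) J (M / 2) hm
  have hhalf : (M : ℝ) / 2 ≤ (M : ℝ) - (M / 2 : ℕ) := by
    have : ((M / 2 : ℕ) : ℝ) ≤ (M : ℝ) / 2 := Nat.cast_div_le
    linarith
  have h4 : J.card * (M : ℝ) ^ (Fintype.card ι) / ((M : ℝ) - (M / 2 : ℕ)) ^ 2
      ≤ M * (M : ℝ) ^ (Fintype.card ι) / ((M : ℝ) / 2) ^ 2 := by
    have : (J.card : ℝ) ≤ M := by exact_mod_cast hJ
    gcongr
  rw [div_pow, Real.sq_sqrt hMr.le] at h1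
  have h5 := h1.trans (h2.trans (h3.trans h4))
  have h6 : (M : ℝ) * (M : ℝ) ^ (Fintype.card ι) / ((M : ℝ) / 2) ^ 2
      = s ^ 2 / M * (4 / s ^ 2 * (M : ℝ) ^ (Fintype.card ι)) := by
    field_simp
    ring
  rw [h6] at h5
  exact le_of_mul_le_mul_left h5 (by positivity)

end Helpers

lemma event_sub {K M : ℕ} (J : Finset (Fin K)) (A B' s : ℝ) (hM : 0 < M)
    (hA : s * √M ≤ A) (hB : s * √M ≤ B') (hs : 0 < s) (hk : (J.card : ℝ) = M + B' - A)
    (ω : Fin K → Fin M)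
    (h : ∃ t ≤ M, A + ((Finset.univ.filter (fun j => ((ω j : ℕ) < t))).card : ℝ) - t ≤ 0) :
    Bad J (s / √M) (M / 2) ω ∨ Bad J (s / √M) (M / 2) (fun j => Fin.rev (ω j)) := by
  obtain ⟨t, htM, ht⟩ := h
  have hMr : (0:ℝ) < M := by exact_mod_cast hM
  have hsq : 0 < √(M:ℝ) := Real.sqrt_pos.mpr hMr
  have hApos : 0 < A := lt_of_lt_of_le (by positivity) hA
  have hBpos : 0 < B' := lt_of_lt_of_le (by positivity) hB
  have hlam : ∀ C : ℝ, s * √M ≤ C → s / √M ≤ C / M := by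
    intro C hC
    rw [div_le_div_iff₀ hsq hMr]
    nlinarith [Real.mul_self_sqrt hMr.le]
  -- count of `J` in the first `t` bins
  have hcount : (∑ j ∈ J, if (ω j : ℕ) < t then (1:ℝ) else 0)
      ≤ ((Finset.univ.filter (fun j => ((ω j : ℕ) < t))).card : ℝ) := by
    rw [Finset.sum_boole]
    exact_mod_cast Finset.card_le_card (Finset.filter_subset_filter _ (Finset.subset_univ J))
  set N : ℝ := ∑ j ∈ J, if (ω j : ℕ) < t then (1:ℝ) else 0 with hN
  have hNt : A + N - t ≤ 0 := by linarith
  by_cases hcase : t ≤ M / 2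
  · left
    refine ⟨t, hcase, ?_⟩
    have hW : WW J t ω = J.card - N := by
      rw [hN, eq_sub_iff_add_eq]
      unfold WW
      rw [← Finset.sum_add_distrib, Finset.card_eq_sum_ones, Nat.cast_sum]
      refine Finset.sum_congr rfl fun j _ => ?_
      split_ifs <;> first | omega | norm_num
    refine le_trans ?_ (le_abs_self _)
    refine (hlam A hA).trans ?_
    unfold DD
    have htr : (t : ℝ) < M := by
      have : t < M := by omega
      exact_mod_cast this
    have h1 : (0:ℝ) < (M:ℝ) - t := by linarith
    have h2 : 1 + B' / M ≤ WW J t ω / ((M:ℝ) - t) := by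
      have h3 : B' / M ≤ B' / ((M:ℝ) - t) := by
        gcongr
        have : (0:ℝ) ≤ t := Nat.cast_nonneg t
        linarith
      have h4 : ((M:ℝ) - t + B') / ((M:ℝ) - t) ≤ WW J t ω / ((M:ℝ) - t) := by
        gcongr
        rw [hW, hk]; linarith
      have h5 : ((M:ℝ) - t + B') / ((M:ℝ) - t) = 1 + B' / ((M:ℝ) - t) := by
        field_simp
      linarith
    have h6 : (J.card : ℝ) / M = 1 + B' / M - A / M := by
      rw [hk]; field_simp
    linarith
  · right
    refine ⟨M - t, by omega, ?_⟩
    have hW : WW J (M - t) (fun j => Fin.rev (ω j)) = N := by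
      rw [hN]
      unfold WW
      refine Finset.sum_congr rfl fun j _ => ?_
      have : (M - t ≤ ((Fin.rev (ω j) : Fin M) : ℕ)) ↔ (ω j : ℕ) < t := by
        rw [Fin.val_rev]
        have := (ω j).2
        omega
      simp only [this]
    refine le_trans ?_ (neg_le_abs _)
    refine (hlam B' hB).trans ?_
    unfold DD
    rw [hW, Nat.cast_sub htM]
    have htpos : (0:ℝ) < t := by
      have : 0 < t := by omega
      exact_mod_cast this
    have e : (M:ℝ) - ((M:ℝ) - t) = t := by ring
    rw [e]
    have h2 : N / t ≤ 1 - A / M := by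
      have h3 : A / M ≤ A / t := by
        gcongr
      have h4 : N / t ≤ ((t:ℝ) - A) / t := by
        gcongr; linarith
      have h5 : ((t:ℝ) - A) / t = 1 - A / t := by field_simp
      linarith
    have h6 : (J.card : ℝ) / M = 1 + B' / M - A / M := by
      rw [hk]; field_simp
    linarith

lemma bridge_bound (M A B : ℕ) (s : ℝ) (hM : 0 < M) (hs : 0 < s)
    (hA : s * √M ≤ (A : ℝ)) (hB : s * √M ≤ (B : ℝ)) (hAB : A ≤ M + B) :
    bridgeMinProb M A B ≤ 8 / s ^ 2 := by
  obtain ⟨J, hJ, B', hB', hk⟩ : ∃ J : Finset (Fin (M + B - A)), J.card ≤ M ∧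
      ∃ B' : ℝ, s * √M ≤ B' ∧ (J.card : ℝ) = M + B' - A := by
    by_cases h : B ≤ A
    · refine ⟨Finset.univ, by simp; omega, B, hB, ?_⟩
      simp only [Finset.card_univ, Fintype.card_fin]
      rw [Nat.cast_sub hAB]; push_cast; ring
    · obtain ⟨J, -, hJ⟩ := Finset.exists_subset_card_eq
        (s := (Finset.univ : Finset (Fin (M + B - A)))) (n := M) (by simp; omega)
      exact ⟨J, hJ.le, A, hA, by rw [hJ]; ring⟩
  have hMr : (0:ℝ) < M := by exact_mod_cast hM
  have hb := bad_bound (M := M) J hM hJ s hs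
  have hrev : ∑ ω : Fin (M + B - A) → Fin M, ind (Bad J (s / √M) (M / 2) (fun j => Fin.rev (ω j)))
      = ∑ ω : Fin (M + B - A) → Fin M, ind (Bad J (s / √M) (M / 2) ω) :=
    Equiv.sum_comp (Equiv.arrowCongr (Equiv.refl _) Fin.revPerm)
      (fun ω => ind (Bad J (s / √M) (M / 2) ω))
  unfold bridgeMinProb
  rw [← Finset.mul_sum]
  have hsum : ∑ ω : Fin (M + B - A) → Fin M, ind (∃ t ≤ M,
      (A : ℝ) + ((Finset.univ.filter (fun j => ((ω j : ℕ) < t))).card : ℝ) - t ≤ 0)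
      ≤ ∑ ω : Fin (M + B - A) → Fin M, (ind (Bad J (s / √M) (M / 2) ω) +
         ind (Bad J (s / √M) (M / 2) (fun j => Fin.rev (ω j)))) := by
    refine Finset.sum_le_sum fun ω _ => ?_
    by_cases h : ∃ t ≤ M,
      (A : ℝ) + ((Finset.univ.filter (fun j => ((ω j : ℕ) < t))).card : ℝ) - t ≤ 0
    · have h0 := ind_le_one (∃ t ≤ M,
        (A : ℝ) + ((Finset.univ.filter (fun j => ((ω j : ℕ) < t))).card : ℝ) - t ≤ 0)
      rcases event_sub J A B' s hM hA hB' hs hk ω h with h1 | h1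
      · have h2 : ind (Bad J (s / √M) (M / 2) ω) = 1 := by simp [ind, h1]
        linarith [ind_nonneg (Bad J (s / √M) (M / 2) (fun j => Fin.rev (ω j)))]
      · have h2 : ind (Bad J (s / √M) (M / 2) (fun j => Fin.rev (ω j))) = 1 := by simp [ind, h1]
        linarith [ind_nonneg (Bad J (s / √M) (M / 2) ω)]
    · have h0 : ind (∃ t ≤ M,
        (A : ℝ) + ((Finset.univ.filter (fun j => ((ω j : ℕ) < t))).card : ℝ) - t ≤ 0) = 0 := by
        unfold ind; rw [if_neg h]
      rw [h0]
      exact add_nonneg (ind_nonneg _) (ind_nonneg _)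
  rw [Finset.sum_add_distrib, hrev] at hsum
  rw [Fintype.card_fin] at hb
  have h1 : ((M:ℝ))⁻¹ ^ (M + B - A) * ∑ ω : Fin (M + B - A) → Fin M, ind (∃ t ≤ M,
      (A : ℝ) + ((Finset.univ.filter (fun j => ((ω j : ℕ) < t))).card : ℝ) - t ≤ 0)
      ≤ ((M:ℝ))⁻¹ ^ (M + B - A) * (8 / s ^ 2 * (M:ℝ) ^ (M + B - A)) := by
    apply mul_le_mul_of_nonneg_left _ (by positivity)
    have : 8 / s ^ 2 * (M:ℝ) ^ (M + B - A) = 2 * (4 / s ^ 2 * (M:ℝ) ^ (M + B - A)) := by ring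
    linarith
  refine h1.trans (le_of_eq ?_)
  rw [inv_pow]
  field_simp

/-- Corollary `middlecor`: let `M = M(n) → ∞`, `s = s(n) → ∞`,
and let `A = A(n)`, `B = B(n)` be positive integers with `A, B ≥ s√M` and
`M + B - A ≥ 0`.  Then the probability that the walk from `A` to `B` over the `M`
middle bins ever drops to `0` or below tends to `0`. -/
theorem bridge_min (M A B : ℕ → ℕ) (s : ℕ → ℝ)
    (hM : Tendsto M atTop atTop) (hs : Tendsto s atTop atTop)
    (hApos : ∀ n, 0 < A n) (hBpos : ∀ n, 0 < B n)
    (hA : ∀ n, s n * Real.sqrt (M n) ≤ (A n : ℝ))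
    (hB : ∀ n, s n * Real.sqrt (M n) ≤ (B n : ℝ))
    (hAB : ∀ n, A n ≤ M n + B n) :
    Tendsto (fun n : ℕ => bridgeMinProb (M n) (A n) (B n)) atTop (𝓝 0) := by
  have h8 : Tendsto (fun n => 8 / (s n) ^ 2) atTop (𝓝 0) :=
    Tendsto.const_div_atTop ((tendsto_pow_atTop two_ne_zero).comp hs) 8
  refine tendsto_of_tendsto_of_tendsto_of_le_of_le' tendsto_const_nhds h8 ?_ ?_
  · refine Eventually.of_forall fun n => ?_
    unfold bridgeMinProb
    exact Finset.sum_nonneg fun ω _ => mul_nonneg (by positivity) (ind_nonneg _)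
  · filter_upwards [hM.eventually_gt_atTop 0, hs.eventually_gt_atTop 0] with n h1 h2
    exact bridge_bound _ _ _ _ h1 h2 (hA n) (hB n) (hAB n)
end
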